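/- arXiv:math-ph/0305046 — 2 statements merged into one kernel-verified Lean document; each statement's English description precedes it below -/
import Mathlib

section
/- Let Ω ⊆ ℝ³ be open and μ : Ω → ℂ continuous. Define P₁^± f := ½ f(1 ± ie₁). Then a differentiable function f : Ω → ℍ(ℂ) satisfies Df + μf = 0 on Ω if and only if f⁺ := P₁⁺f satisfies Df⁺ + f⁺·(μ ie₁) = 0 on Ω and f⁻ := P₁⁻f satisfies Df⁻ − f⁻·(μ ie₁) = 0 on Ω; moreover f = f⁺ + f⁻. -/
noncomputable section

abbrev HC := Quaternion ℂ

def e1 : HC := ⟨0, 1, 0, 0⟩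
def e2 : HC := ⟨0, 0, 1, 0⟩
def e3 : HC := ⟨0, 0, 0, 1⟩

def pd (k : Fin 3) (g : (Fin 3 → ℝ) → ℂ) (x : Fin 3 → ℝ) : ℂ :=
  fderiv ℝ g x (Pi.single k 1)

def lap (g : (Fin 3 → ℝ) → ℂ) (x : Fin 3 → ℝ) : ℂ :=
  pd 0 (pd 0 g) x + pd 1 (pd 1 g) x + pd 2 (pd 2 g) x

def pdq (k : Fin 3) (f : (Fin 3 → ℝ) → HC) (x : Fin 3 → ℝ) : HC :=
  ⟨pd k (fun y => (f y).re) x, pd k (fun y => (f y).imI) x,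
   pd k (fun y => (f y).imJ) x, pd k (fun y => (f y).imK) x⟩

def Dq (f : (Fin 3 → ℝ) → HC) (x : Fin 3 → ℝ) : HC :=
  e1 * pdq 0 f x + e2 * pdq 1 f x + e3 * pdq 2 f x

def lapq (f : (Fin 3 → ℝ) → HC) (x : Fin 3 → ℝ) : HC :=
  ⟨lap (fun y => (f y).re) x, lap (fun y => (f y).imI) x,
   lap (fun y => (f y).imJ) x, lap (fun y => (f y).imK) x⟩

def QDiffOn (f : (Fin 3 → ℝ) → HC) (Ω : Set (Fin 3 → ℝ)) : Prop :=
  DifferentiableOn ℝ (fun y => (f y).re) Ω ∧ DifferentiableOn ℝ (fun y => (f y).imI) Ω ∧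
  DifferentiableOn ℝ (fun y => (f y).imJ) Ω ∧ DifferentiableOn ℝ (fun y => (f y).imK) Ω

def QC2On (f : (Fin 3 → ℝ) → HC) (Ω : Set (Fin 3 → ℝ)) : Prop :=
  ContDiffOn ℝ 2 (fun y => (f y).re) Ω ∧ ContDiffOn ℝ 2 (fun y => (f y).imI) Ω ∧
  ContDiffOn ℝ 2 (fun y => (f y).imJ) Ω ∧ ContDiffOn ℝ 2 (fun y => (f y).imK) Ω


/-- Right multiplication projections `P₁^± f = ½ f (1 ± i e₁)`. -/
def P1p (f : (Fin 3 → ℝ) → HC) : (Fin 3 → ℝ) → HC :=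
  fun x => (2⁻¹ : ℂ) • (f x * (1 + (Complex.I : HC) * e1))

def P1m (f : (Fin 3 → ℝ) → HC) : (Fin 3 → ℝ) → HC :=
  fun x => (2⁻¹ : ℂ) • (f x * (1 - (Complex.I : HC) * e1))

/-!
If `a² = 1`, then `½(1 + a)` and `½(1 - a)` are complementary idempotents on which right
multiplication by `a` acts as `1` and `-1`. The operator `D` multiplies by the units `eₖ` from the
left, so it commutes with right multiplication by constants, and `μ` is central. Hence
`Df^± ± f^±·(μa)` is the image of `Df + μf` under the corresponding projection, and a biquaternion
vanishes iff both of its projections do. The paper's splitting is the case `a = ie₁`.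
-/

section RightProj

variable {K A : Type*} [Field K] [Ring A] [Algebra K A]

variable (K) in
/-- Right multiplication by `½(1 + a)`, which is a projection when `a * a = 1`. The complementary
projection is `rightProj K (-a)`. -/
def rightProj (a : A) : A →ₗ[K] A :=
  LinearMap.mulRight K ((2⁻¹ : K) • (1 + a))

theorem rightProj_apply (a q : A) : rightProj K a q = q * ((2⁻¹ : K) • (1 + a)) :=
  rfl

theorem rightProj_mul_left (a r q : A) : rightProj K a (r * q) = r * rightProj K a q := by
  simp only [rightProj_apply, mul_assoc]

theorem rightProj_mul_self {a : A} (ha : a * a = 1) (q : A) :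
    rightProj K a q * a = rightProj K a q := by
  rw [rightProj_apply, mul_assoc, smul_mul_assoc, add_mul, one_mul, ha, add_comm a 1]

theorem rightProj_add_rightProj_neg [NeZero (2 : K)] (a q : A) :
    rightProj K a q + rightProj K (-a) q = q := by
  have half_add_half : (2⁻¹ : K) • (1 + a) + (2⁻¹ : K) • (1 + -a) = 1 := by
    rw [← smul_add, add_add_add_comm, add_neg_cancel, add_zero, ← two_smul K,
      inv_smul_smul₀ two_ne_zero]
  rw [rightProj_apply, rightProj_apply, ← mul_add, half_add_half, mul_one]

theorem eq_zero_iff_rightProj_eq_zero [NeZero (2 : K)] (a q : A) :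
    q = 0 ↔ rightProj K a q = 0 ∧ rightProj K (-a) q = 0 := by
  refine ⟨fun h => by simp only [h, map_zero, and_self], fun ⟨hpos, hneg⟩ => ?_⟩
  rw [← rightProj_add_rightProj_neg (K := K) a q, hpos, hneg, add_zero]

end RightProj

section PartialDerivative

variable {g h : (Fin 3 → ℝ) → ℂ} {x : Fin 3 → ℝ}

theorem pd_add (k : Fin 3) (hg : DifferentiableAt ℝ g x) (hh : DifferentiableAt ℝ h x) :
    pd k (fun y => g y + h y) x = pd k g x + pd k h x := by
  simp only [pd, fderiv_fun_add hg hh, add_apply]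

theorem pd_sub (k : Fin 3) (hg : DifferentiableAt ℝ g x) (hh : DifferentiableAt ℝ h x) :
    pd k (fun y => g y - h y) x = pd k g x - pd k h x := by
  simp only [pd, fderiv_fun_sub hg hh, sub_apply]

theorem pd_mul_const (k : Fin 3) (hg : DifferentiableAt ℝ g x) (c : ℂ) :
    pd k (fun y => g y * c) x = pd k g x * c := by
  simp only [pd, fderiv_mul_const hg, smul_apply, smul_eq_mul, mul_comm c]

end PartialDerivative

/-- Differentiability at a point of a biquaternion-valued function, expressed componentwise as in
`QDiffOn`. -/
def QDiffAt (f : (Fin 3 → ℝ) → HC) (x : Fin 3 → ℝ) : Prop :=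
  DifferentiableAt ℝ (fun y => (f y).re) x ∧ DifferentiableAt ℝ (fun y => (f y).imI) x ∧
  DifferentiableAt ℝ (fun y => (f y).imJ) x ∧ DifferentiableAt ℝ (fun y => (f y).imK) x

theorem QDiffOn.qDiffAt {f : (Fin 3 → ℝ) → HC} {Ω : Set (Fin 3 → ℝ)} {x : Fin 3 → ℝ}
    (hf : QDiffOn f Ω) (hx : Ω ∈ nhds x) : QDiffAt f x :=
  ⟨hf.1.differentiableAt hx, hf.2.1.differentiableAt hx, hf.2.2.1.differentiableAt hx,
    hf.2.2.2.differentiableAt hx⟩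

section MoisilTheodoresco

variable {f : (Fin 3 → ℝ) → HC} {x : Fin 3 → ℝ}

theorem re_pdq (k : Fin 3) (f : (Fin 3 → ℝ) → HC) (x : Fin 3 → ℝ) :
    (pdq k f x).re = pd k (fun y => (f y).re) x :=
  rfl

theorem imI_pdq (k : Fin 3) (f : (Fin 3 → ℝ) → HC) (x : Fin 3 → ℝ) :
    (pdq k f x).imI = pd k (fun y => (f y).imI) x :=
  rfl

theorem imJ_pdq (k : Fin 3) (f : (Fin 3 → ℝ) → HC) (x : Fin 3 → ℝ) :
    (pdq k f x).imJ = pd k (fun y => (f y).imJ) x :=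
  rfl

theorem imK_pdq (k : Fin 3) (f : (Fin 3 → ℝ) → HC) (x : Fin 3 → ℝ) :
    (pdq k f x).imK = pd k (fun y => (f y).imK) x :=
  rfl

theorem pdq_mul_const (k : Fin 3) (hf : QDiffAt f x) (c : HC) :
    pdq k (fun y => f y * c) x = pdq k f x * c := by
  obtain ⟨hre, hI, hJ, hK⟩ := hf
  ext <;> simp (disch := fun_prop) only [re_pdq, imI_pdq, imJ_pdq, imK_pdq, Quaternion.re_mul,
    Quaternion.imI_mul, Quaternion.imJ_mul, Quaternion.imK_mul, pd_add, pd_sub, pd_mul_const]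

theorem Dq_mul_const (hf : QDiffAt f x) (c : HC) :
    Dq (fun y => f y * c) x = Dq f x * c := by
  simp only [Dq, pdq_mul_const _ hf, add_mul, mul_assoc]

theorem Dq_rightProj (hf : QDiffAt f x) (a : HC) :
    Dq (fun y => rightProj ℂ a (f y)) x = rightProj ℂ a (Dq f x) :=
  Dq_mul_const hf _

theorem Dq_rightProj_add_mul {a : HC} (ha : a * a = 1) (hf : QDiffAt f x) (m : ℂ) :
    Dq (fun y => rightProj ℂ a (f y)) x + rightProj ℂ a (f x) * ((m : HC) * a) =
      rightProj ℂ a (Dq f x + (m : HC) * f x) := by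
  rw [Dq_rightProj hf, map_add, rightProj_mul_left, Quaternion.coe_commutes m a, ← mul_assoc,
    rightProj_mul_self ha, ← Quaternion.coe_commutes]

theorem Dq_rightProj_neg_sub_mul {a : HC} (ha : a * a = 1) (hf : QDiffAt f x) (m : ℂ) :
    Dq (fun y => rightProj ℂ (-a) (f y)) x - rightProj ℂ (-a) (f x) * ((m : HC) * a) =
      rightProj ℂ (-a) (Dq f x + (m : HC) * f x) := by
  rw [← Dq_rightProj_add_mul ((neg_mul_neg a a).trans ha) hf, mul_neg, mul_neg, sub_eq_add_neg]

end MoisilTheodoresco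

theorem scalar_plus_D_splitting_general {a : HC} (ha : a * a = 1) {Ω : Set (Fin 3 → ℝ)}
    (μ : (Fin 3 → ℝ) → ℂ) {f : (Fin 3 → ℝ) → HC} (hf : ∀ x ∈ Ω, QDiffAt f x) :
    ((∀ x ∈ Ω, Dq f x + (μ x : HC) * f x = 0) ↔
      ((∀ x ∈ Ω, Dq (fun y => rightProj ℂ a (f y)) x +
          rightProj ℂ a (f x) * ((μ x : HC) * a) = 0) ∧
       (∀ x ∈ Ω, Dq (fun y => rightProj ℂ (-a) (f y)) x -
          rightProj ℂ (-a) (f x) * ((μ x : HC) * a) = 0))) ∧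
    (∀ x, f x = rightProj ℂ a (f x) + rightProj ℂ (-a) (f x)) := by
  refine ⟨?_, fun x => (rightProj_add_rightProj_neg a (f x)).symm⟩
  rw [← forall₂_and]
  refine forall₂_congr fun x hx => ?_
  rw [Dq_rightProj_add_mul ha (hf x hx), Dq_rightProj_neg_sub_mul ha (hf x hx)]
  exact eq_zero_iff_rightProj_eq_zero a _

theorem e1_mul_self : e1 * e1 = -1 := by
  have i_mul_i := (QuaternionAlgebra.Basis.self ℂ (c₁ := -1) (c₂ := 0) (c₃ := -1)).i_mul_i
  rwa [zero_smul, add_zero, neg_one_smul] at i_mul_i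

theorem I_mul_e1_mul_self : ((Complex.I : HC) * e1) * ((Complex.I : HC) * e1) = 1 := by
  rw [(Quaternion.coe_commute Complex.I e1).symm.mul_mul_mul_comm, e1_mul_self,
    ← Quaternion.coe_mul, Complex.I_mul_I]
  simp

theorem P1p_eq_rightProj (f : (Fin 3 → ℝ) → HC) :
    P1p f = fun x => rightProj ℂ ((Complex.I : HC) * e1) (f x) := by
  funext x
  simp only [P1p, rightProj_apply, mul_smul_comm]

theorem P1m_eq_rightProj (f : (Fin 3 → ℝ) → HC) :
    P1m f = fun x => rightProj ℂ (-((Complex.I : HC) * e1)) (f x) := by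
  funext x
  simp only [P1m, rightProj_apply, mul_smul_comm, sub_eq_add_neg]

/-- the splitting (Ps±) of the paper,
`D + μI = P₁⁺(D + M^{μie₁}) + P₁⁻(D − M^{μie₁})`:
`f` solves `Df + μf = 0` iff `f⁺ = P₁⁺f` solves `Df⁺ + f⁺·(μ i e₁) = 0` and
`f⁻ = P₁⁻f` solves `Df⁻ − f⁻·(μ i e₁) = 0`; moreover `f = f⁺ + f⁻`. -/
theorem scalar_plus_D_splitting
    (Ω : Set (Fin 3 → ℝ)) (hΩ : IsOpen Ω)
    (μ : (Fin 3 → ℝ) → ℂ) (hμ : ContinuousOn μ Ω)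
    (f : (Fin 3 → ℝ) → HC) (hf : QDiffOn f Ω) :
    ((∀ x ∈ Ω, Dq f x + (μ x : HC) * f x = 0) ↔
      ((∀ x ∈ Ω, Dq (P1p f) x + P1p f x * ((μ x : HC) * ((Complex.I : HC) * e1)) = 0) ∧
       (∀ x ∈ Ω, Dq (P1m f) x - P1m f x * ((μ x : HC) * ((Complex.I : HC) * e1)) = 0))) ∧
    (∀ x, f x = P1p f x + P1m f x) := by
  rw [P1p_eq_rightProj, P1m_eq_rightProj]
  exact scalar_plus_D_splitting_general I_mul_e1_mul_self μ
    fun x hx => hf.qDiffAt (hΩ.mem_nhds hx)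
end
end

section
/- Let Ω ⊆ ℝ³ be open, ω, m ∈ ℝ, and φ_sc : Ω → ℝ continuous. Let Ω̃ := {x ∈ ℝ³ : (x₁,x₂,−x₃) ∈ Ω}. For a differentiable Φ : Ω → ℂ⁴ define F : Ω̃ → ℍ(ℂ) by F = F₀ + F₁e₁ + F₂e₂ + F₃e₃ with F₀(x) = −½(Φ̃₁(x) − Φ̃₂(x)), F₁(x) = (i/2)(Φ̃₀(x) − Φ̃₃(x)), F₂(x) = −½(Φ̃₀(x) + Φ̃₃(x)), F₃(x) = (i/2)(Φ̃₁(x) + Φ̃₂(x)), where Φ̃(x) := Φ(x₁,x₂,−x₃). Then Φ satisfies the Dirac equation with scalar potential, iωγ₀Φ + γ₁∂₁Φ + γ₂∂₂Φ + γ₃∂₃Φ + i(m + φ_sc)Φ = 0 on Ω, if and only if F satisfies DF + F·α_sc = 0 on Ω̃, where α_sc(x) = −(iω e₁ + (m + φ_sc(x₁,x₂,−x₃)) e₂). -/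
noncomputable section

open Matrix in
/-- The γ-matrices in the standard Dirac representation. -/
def γ0 : Matrix (Fin 4) (Fin 4) ℂ := !![1,0,0,0; 0,1,0,0; 0,0,-1,0; 0,0,0,-1]
open Matrix in
def γ1 : Matrix (Fin 4) (Fin 4) ℂ := !![0,0,0,1; 0,0,1,0; 0,-1,0,0; -1,0,0,0]
open Matrix in
def γ2 : Matrix (Fin 4) (Fin 4) ℂ :=
  !![0,0,0,-Complex.I; 0,0,Complex.I,0; 0,Complex.I,0,0; -Complex.I,0,0,0]
open Matrix in
def γ3 : Matrix (Fin 4) (Fin 4) ℂ := !![0,0,1,0; 0,0,0,-1; -1,0,0,0; 0,1,0,0]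

/-- Componentwise partial derivative of a `ℂ⁴`-valued function. -/
def pdv (k : Fin 3) (Φ : (Fin 3 → ℝ) → (Fin 4 → ℂ)) (x : Fin 3 → ℝ) : Fin 4 → ℂ :=
  fun j => pd k (fun y => Φ y j) x

/-- The reflection `x ↦ (x₁, x₂, −x₃)`. -/
def refl3 (x : Fin 3 → ℝ) : Fin 3 → ℝ := ![x 0, x 1, -x 2]

/-- The transform `F = 𝒜[Φ]` of the paper (with `Φ̃(x) = Φ(x₁,x₂,−x₃)`). -/
def AF (Φ : (Fin 3 → ℝ) → (Fin 4 → ℂ)) (x : Fin 3 → ℝ) : HC :=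
  ⟨-(Φ (refl3 x) 1 - Φ (refl3 x) 2) / 2,
   Complex.I * (Φ (refl3 x) 0 - Φ (refl3 x) 3) / 2,
   -(Φ (refl3 x) 0 + Φ (refl3 x) 3) / 2,
   Complex.I * (Φ (refl3 x) 1 + Φ (refl3 x) 2) / 2⟩

/-!
On values, `𝒜` is a constant linear isomorphism from spinors to biquaternions. It turns the matrices
`γ₁γ₂γ₃γ₁`, `γ₁γ₂γ₃γ₂`, `-γ₁γ₂γ₃γ₃` into left multiplication by `e₁`, `e₂`, `e₃`, and `-γ₁γ₂γ₃γ₀`,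
`-iγ₁γ₂γ₃` into right multiplication by `e₁`, `e₂`. The odd sign at `e₃` is undone by the reflection
`x₃ ↦ -x₃`, which reverses `∂₃`. So the biquaternionic operator at `x` is `𝒜γ₁γ₂γ₃` applied to the
Dirac operator at the reflected point, and `γ₁γ₂γ₃` is invertible because its square is `1`.
-/

/-- The signs `(1, 1, -1)` by which the reflection `refl3` scales the coordinates. -/
def reflSign : Fin 3 → ℝ := ![1, 1, -1]

theorem refl3_eq_mul (x : Fin 3 → ℝ) : refl3 x = reflSign * x := by
  ext j
  fin_cases j <;> simp [refl3, reflSign]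

theorem refl3_involutive : Function.Involutive refl3 := fun x => by
  ext j
  fin_cases j <;> simp [refl3]

/-- The reflection `refl3` as a continuous linear automorphism of `ℝ³`. -/
def refl3Equiv : (Fin 3 → ℝ) ≃L[ℝ] (Fin 3 → ℝ) :=
  (LinearEquiv.ofInvolutive
    { toFun := refl3
      map_add' := fun x y => by simp only [refl3_eq_mul, mul_add]
      map_smul' := fun c x => by simp only [refl3_eq_mul, mul_smul_comm, RingHom.id_apply] }
    refl3_involutive).toContinuousLinearEquiv

theorem refl3_single (k : Fin 3) (c : ℝ) :
    refl3 (Pi.single k c) = reflSign k • Pi.single k c := by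
  rw [refl3_eq_mul, ← Pi.single_smul, ← Pi.single_mul_right, smul_eq_mul]

theorem pd_comp_refl3 (k : Fin 3) (g : (Fin 3 → ℝ) → ℂ) (x : Fin 3 → ℝ) :
    pd k (fun y => g (refl3 y)) x = reflSign k • pd k g (refl3 x) := by
  calc pd k (fun y => g (refl3 y)) x
      = fderiv ℝ g (refl3 x) (refl3 (Pi.single k 1)) :=
        DFunLike.congr_fun (refl3Equiv.comp_right_fderiv (f := g) (x := x)) _
    _ = reflSign k • pd k g (refl3 x) := by rw [refl3_single, map_smul, pd]

theorem pdv_comp_refl3 (k : Fin 3) (Φ : (Fin 3 → ℝ) → (Fin 4 → ℂ)) (x : Fin 3 → ℝ) :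
    pdv k (fun y => Φ (refl3 y)) x = reflSign k • pdv k Φ (refl3 x) :=
  funext fun j => pd_comp_refl3 k (fun y => Φ y j) x

theorem pd_linearMap_comp {ι : Type*} [Finite ι] (ℓ : (ι → ℂ) →ₗ[ℝ] ℂ) (k : Fin 3)
    {Ψ : (Fin 3 → ℝ) → (ι → ℂ)} {x : Fin 3 → ℝ}
    (hΨ : ∀ j, DifferentiableAt ℝ (fun y => Ψ y j) x) :
    pd k (fun y => ℓ (Ψ y)) x = ℓ (fun j => pd k (fun y => Ψ y j) x) := by
  cases nonempty_fintype ι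
  have hpi : HasFDerivAt Ψ (.pi fun j => fderiv ℝ (fun y => Ψ y j) x) x :=
    hasFDerivAt_pi.2 fun j => (hΨ j).hasFDerivAt
  exact DFunLike.congr_fun (ℓ.toContinuousLinearMap.hasFDerivAt.comp x hpi).fderiv _

theorem pdq_linearMap_comp (L : (Fin 4 → ℂ) →ₗ[ℝ] HC) (k : Fin 3)
    {Ψ : (Fin 3 → ℝ) → (Fin 4 → ℂ)} {x : Fin 3 → ℝ}
    (hΨ : ∀ j, DifferentiableAt ℝ (fun y => Ψ y j) x) :
    pdq k (fun y => L (Ψ y)) x = L (pdv k Ψ x) := by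
  have component (p : HC →ₗ[ℂ] ℂ) : pd k (fun y => p (L (Ψ y))) x = p (L (pdv k Ψ x)) :=
    pd_linearMap_comp (p.restrictScalars ℝ ∘ₗ L) k hΨ
  ext
  · exact component (QuaternionAlgebra.reₗ _ _ _)
  · exact component (QuaternionAlgebra.imIₗ _ _ _)
  · exact component (QuaternionAlgebra.imJₗ _ _ _)
  · exact component (QuaternionAlgebra.imKₗ _ _ _)

/-- The transform `𝒜` on values: `AF Φ x = ofSpinor (Φ (refl3 x))`. -/
@[simps]
def ofSpinor (v : Fin 4 → ℂ) : HC :=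
  ⟨-(v 1 - v 2) / 2, Complex.I * (v 0 - v 3) / 2, -(v 0 + v 3) / 2, Complex.I * (v 1 + v 2) / 2⟩

/-- `ofSpinor` as a `ℂ`-linear isomorphism from spinors to biquaternions. -/
@[simps apply]
def spinorEquiv : (Fin 4 → ℂ) ≃ₗ[ℂ] HC where
  toFun := ofSpinor
  map_add' v w := by ext <;> simp <;> ring
  map_smul' c v := by ext <;> simp <;> ring
  invFun q := ![-(q.imJ + Complex.I * q.imI), -(q.re + Complex.I * q.imK),
    q.re - Complex.I * q.imK, Complex.I * q.imI - q.imJ]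
  left_inv v := by
    ext j
    fin_cases j <;> simp <;> grind [Complex.I_mul_I]
  right_inv q := by
    ext <;> simp <;> grind [Complex.I_mul_I]

theorem AF_eq (Φ : (Fin 3 → ℝ) → (Fin 4 → ℂ)) :
    AF Φ = fun y => spinorEquiv (Φ (refl3 y)) := rfl

theorem pdq_AF (k : Fin 3) {Φ : (Fin 3 → ℝ) → (Fin 4 → ℂ)} {x : Fin 3 → ℝ}
    (hΦ : ∀ j, DifferentiableAt ℝ (fun y => Φ y j) (refl3 x)) :
    pdq k (AF Φ) x = spinorEquiv (reflSign k • pdv k Φ (refl3 x)) := by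
  rw [AF_eq, ← pdv_comp_refl3]
  exact pdq_linearMap_comp (spinorEquiv.toLinearMap.restrictScalars ℝ) k fun j =>
    (hΦ j).comp x refl3Equiv.differentiableAt

section Intertwining

open Matrix

attribute [simps] e1 e2 e3

/-- The product `γ₁γ₂γ₃`. -/
def γ123 : Matrix (Fin 4) (Fin 4) ℂ := γ1 * γ2 * γ3

theorem γ123_eq : γ123 = !![0, 0, -Complex.I, 0; 0, 0, 0, -Complex.I;
    Complex.I, 0, 0, 0; 0, Complex.I, 0, 0] := by
  simp [γ123, γ1, γ2, γ3]

theorem γ123_mul_self : γ123 * γ123 = 1 := by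
  rw [γ123_eq]
  ext i j
  fin_cases i <;> fin_cases j <;> simp

theorem γ123_mulVec_injective : Function.Injective γ123.mulVec :=
  mulVec_injective_of_isUnit (.of_mul_eq_one γ123 γ123_mul_self)

variable (v : Fin 4 → ℂ)

theorem e1_mul_spinorEquiv : e1 * spinorEquiv v = spinorEquiv (γ123 *ᵥ γ1 *ᵥ v) := by
  ext <;> simp [γ123_eq, γ1, vecHead, vecTail] <;> grind [Complex.I_mul_I]

theorem e2_mul_spinorEquiv : e2 * spinorEquiv v = spinorEquiv (γ123 *ᵥ γ2 *ᵥ v) := by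
  ext <;> simp [γ123_eq, γ2, vecHead, vecTail] <;> grind [Complex.I_mul_I]

theorem e3_mul_spinorEquiv : e3 * spinorEquiv v = -spinorEquiv (γ123 *ᵥ γ3 *ᵥ v) := by
  ext <;> simp [γ123_eq, γ3, vecHead, vecTail] <;> grind [Complex.I_mul_I]

theorem spinorEquiv_mul_e1 : spinorEquiv v * e1 = -spinorEquiv (γ123 *ᵥ γ0 *ᵥ v) := by
  ext <;> simp [γ123_eq, γ0, vecHead, vecTail] <;> grind [Complex.I_mul_I]

theorem spinorEquiv_mul_e2 : spinorEquiv v * e2 = -Complex.I • spinorEquiv (γ123 *ᵥ v) := by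
  ext <;> simp [γ123_eq, vecHead, vecTail] <;> grind [Complex.I_mul_I]

end Intertwining

section Operators

open Matrix

/-- The Dirac operator with a frequency `ω` and a scalar coefficient `μ` (mass plus scalar
potential), both allowed to be complex and to vary from point to point. -/
def diracOp (ω μ : (Fin 3 → ℝ) → ℂ) (Φ : (Fin 3 → ℝ) → (Fin 4 → ℂ)) (x : Fin 3 → ℝ) :
    Fin 4 → ℂ :=
  (Complex.I * ω x) • γ0 *ᵥ Φ x + γ1 *ᵥ pdv 0 Φ x + γ2 *ᵥ pdv 1 Φ x + γ3 *ᵥ pdv 2 Φ x +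
    (Complex.I * μ x) • Φ x

/-- The coefficient `α_sc` of the biquaternionic equation matching `diracOp ω μ`. -/
def alphaSc (ω μ : (Fin 3 → ℝ) → ℂ) (x : Fin 3 → ℝ) : HC :=
  -((Complex.I * ω (refl3 x)) • e1 + μ (refl3 x) • e2)

variable {ω μ : (Fin 3 → ℝ) → ℂ} {Φ : (Fin 3 → ℝ) → (Fin 4 → ℂ)} {x : Fin 3 → ℝ}

theorem Dq_AF (hΦ : ∀ j, DifferentiableAt ℝ (fun y => Φ y j) (refl3 x)) :
    Dq (AF Φ) x = spinorEquiv (γ123 *ᵥ (γ1 *ᵥ pdv 0 Φ (refl3 x) + γ2 *ᵥ pdv 1 Φ (refl3 x) +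
      γ3 *ᵥ pdv 2 Φ (refl3 x))) := by
  rw [Dq, pdq_AF 0 hΦ, pdq_AF 1 hΦ, pdq_AF 2 hΦ, e1_mul_spinorEquiv, e2_mul_spinorEquiv,
    e3_mul_spinorEquiv]
  simp only [reflSign, cons_val, one_smul, neg_smul, mulVec_neg, mulVec_add, map_neg, map_add,
    neg_neg]

theorem AF_mul_alphaSc : AF Φ x * alphaSc ω μ x =
    spinorEquiv (γ123 *ᵥ ((Complex.I * ω (refl3 x)) • γ0 *ᵥ Φ (refl3 x) +
      (Complex.I * μ (refl3 x)) • Φ (refl3 x))) := by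
  rw [AF_eq, alphaSc, mul_neg (spinorEquiv _), mul_add, Algebra.mul_smul_comm _ (spinorEquiv _) e1,
    Algebra.mul_smul_comm _ (spinorEquiv _) e2, spinorEquiv_mul_e1, spinorEquiv_mul_e2]
  simp only [mulVec_add, mulVec_smul, map_add, map_smul]
  module

theorem Dq_AF_add_AF_mul_alphaSc (hΦ : ∀ j, DifferentiableAt ℝ (fun y => Φ y j) (refl3 x)) :
    Dq (AF Φ) x + AF Φ x * alphaSc ω μ x =
      spinorEquiv (γ123 *ᵥ diracOp ω μ Φ (refl3 x)) := by
  rw [Dq_AF hΦ, AF_mul_alphaSc, ← map_add, ← mulVec_add, diracOp]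
  congr 2
  abel

theorem Dq_AF_add_AF_mul_alphaSc_eq_zero_iff
    (hΦ : ∀ j, DifferentiableAt ℝ (fun y => Φ y j) (refl3 x)) :
    Dq (AF Φ) x + AF Φ x * alphaSc ω μ x = 0 ↔ diracOp ω μ Φ (refl3 x) = 0 := by
  rw [Dq_AF_add_AF_mul_alphaSc hΦ, map_eq_zero_iff _ spinorEquiv.injective]
  exact map_eq_zero_iff γ123.mulVecLin γ123_mulVec_injective

end Operators

theorem dirac_scalar_potential_equiv_general (S : Set (Fin 3 → ℝ)) (ω μ : (Fin 3 → ℝ) → ℂ)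
    (Φ : (Fin 3 → ℝ) → (Fin 4 → ℂ))
    (hΦ : ∀ x ∈ S, ∀ j, DifferentiableAt ℝ (fun y => Φ y j) x) :
    (∀ x ∈ S, diracOp ω μ Φ x = 0) ↔
      ∀ x, refl3 x ∈ S → Dq (AF Φ) x + AF Φ x * alphaSc ω μ x = 0 := by
  rw [refl3_involutive.surjective.forall]
  exact forall₂_congr fun x hx => (Dq_AF_add_AF_mul_alphaSc_eq_zero_iff (hΦ _ hx)).symm

/-- the Dirac equation with scalar potential
`iωγ₀Φ + Σ γ_k ∂_kΦ + i(m + φ_sc)Φ = 0` on `Ω` is equivalent, under the transform `F = 𝒜[Φ]`,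
to `DF + F·α_sc = 0` on `Ω̃`, with `α_sc = −(iω e₁ + (m + φ̃_sc) e₂)`. -/
theorem dirac_scalar_potential_equiv
    (Ω : Set (Fin 3 → ℝ)) (hΩ : IsOpen Ω) (ω m : ℝ)
    (φsc : (Fin 3 → ℝ) → ℝ) (hφ : ContinuousOn φsc Ω)
    (Φ : (Fin 3 → ℝ) → (Fin 4 → ℂ))
    (hΦ : ∀ j : Fin 4, DifferentiableOn ℝ (fun y => Φ y j) Ω) :
    (∀ x ∈ Ω,
        (Complex.I * (ω : ℂ)) • γ0.mulVec (Φ x) + γ1.mulVec (pdv 0 Φ x) +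
          γ2.mulVec (pdv 1 Φ x) + γ3.mulVec (pdv 2 Φ x) +
          (Complex.I * ((m : ℂ) + (φsc x : ℂ))) • Φ x = 0) ↔
    (∀ x, refl3 x ∈ Ω →
        Dq (AF Φ) x + AF Φ x *
          (-((Complex.I * (ω : ℂ)) • e1 + (((m : ℂ) + (φsc (refl3 x) : ℂ))) • e2)) = 0) := by
  exact dirac_scalar_potential_equiv_general Ω (fun _ => ω) (fun x => m + φsc x) Φ fun x hx j =>
    (hΦ j).differentiableAt (hΩ.mem_nhds hx)
end
end
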